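/- For any k, l ∈ ℝ and δ > 0 there exists a constant C = C(k,l,δ) such that for every Schwartz function u on ℝ³, ‖u‖²_{H^k_l(ℝ³)} ≤ C ‖u‖_{H^{k+δ}_{2l}(ℝ³)} ‖u‖_{H^{k-δ}(ℝ³)}. -/

import Mathlib

open MeasureTheory Real
open scoped FourierTransform SchwartzMap
noncomputable section
abbrev V := EuclideanSpace ℝ (Fin 3)
/-- Japanese bracket `⟨v⟩ = (1+|v|²)^{1/2}`. -/
def jb (v : V) : ℝ := (1 + ‖v‖^2) ^ ((1:ℝ)/2)
/-- `L²` norm. -/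
def l2norm (f : V → ℂ) : ℝ := (∫ v, ‖f v‖^2) ^ ((1:ℝ)/2)
/-- Sobolev `H^k` norm defined via the Fourier transform. -/
def Hnorm (k : ℝ) (f : V → ℂ) : ℝ := (∫ ξ, (jb ξ)^(2*k) * ‖𝓕 f ξ‖^2) ^ ((1:ℝ)/2)
/-- Weighted Sobolev norm `‖u‖_{H^k_l} = ‖⟨·⟩^l u‖_{H^k}`. -/
def HnormW (k l : ℝ) (f : V → ℂ) : ℝ := Hnorm k (fun v => ((jb v ^ l : ℝ) : ℂ) * f v)
/-- The Fourier multiplier `(1-Δ)^{r/2} = ⟨D⟩^r` with symbol `(1+|ξ|²)^{r/2}`. -/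
def besselOp (r : ℝ) (f : V → ℂ) : V → ℂ :=
  fun v => 𝓕⁻ (fun ξ => (((1 + ‖ξ‖^2) ^ (r/2) : ℝ) : ℂ) * 𝓕 f ξ) v



namespace WSI

open SchwartzMap LineDeriv

def om (s : ℝ) (x : V) : ℝ := (1 + ‖x‖ ^ 2) ^ s

lemma base_pos (x : V) : 0 < 1 + ‖x‖ ^ 2 := by positivity

lemma om_pos (s : ℝ) (x : V) : 0 < om s x := Real.rpow_pos_of_pos (base_pos x) s

lemma om_add (s t : ℝ) (x : V) : om (s + t) x = om s x * om t x :=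
  Real.rpow_add (base_pos x) s t

lemma om_zero (x : V) : om 0 x = 1 := Real.rpow_zero _

lemma om_one (x : V) : om 1 x = 1 + ‖x‖ ^ 2 := Real.rpow_one _

lemma om_htg (s : ℝ) : (om s).HasTemperateGrowth :=
  Function.hasTemperateGrowth_one_add_norm_sq_rpow V s

def omc (s : ℝ) (x : V) : ℂ := ((om s x : ℝ) : ℂ)

lemma omc_htg (s : ℝ) : (omc s).HasTemperateGrowth := by
  have := om_htg s
  unfold omc
  fun_prop

lemma om_cont (s : ℝ) : Continuous (om s) := (om_htg s).1.continuous

/-- multiplication of a Schwartz function -/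
def M (a : V → ℂ) (f : 𝓢(V, ℂ)) : 𝓢(V, ℂ) := smulLeftCLM ℂ a f

lemma M_apply {a : V → ℂ} (ha : a.HasTemperateGrowth) (f : 𝓢(V, ℂ)) (x : V) :
    M a f x = a x * f x := by
  simp [M, ha]

lemma M_add (a : V → ℂ) (f g : 𝓢(V, ℂ)) : M a (f + g) = M a f + M a g := by
  simp [M]

lemma sq_int (g : 𝓢(V, ℂ)) : Integrable (fun x => ‖g x‖ ^ 2) := by
  have := (g.memLp 2 volume).integrable_norm_pow (by norm_num)
  simpa using this

lemma wsq_eq (s : ℝ) (g : 𝓢(V, ℂ)) (x : V) :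
    om s x * ‖g x‖ ^ 2 = ‖M (omc (s/2)) g x‖ ^ 2 := by
  rw [M_apply (omc_htg _), norm_mul, mul_pow]
  congr 1
  rw [omc, Complex.norm_real, Real.norm_of_nonneg (om_pos _ _).le, sq, ← om_add]
  congr 1; ring

lemma wsq_int (s : ℝ) (g : 𝓢(V, ℂ)) : Integrable (fun x => om s x * ‖g x‖ ^ 2) := by
  simp_rw [wsq_eq]
  exact sq_int _

/-- squared Sobolev norm -/
def I2 (s : ℝ) (f : 𝓢(V, ℂ)) : ℝ := ∫ ξ, om s ξ * ‖(𝓕 f : 𝓢(V, ℂ)) ξ‖ ^ 2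

lemma I2_nonneg (s : ℝ) (f : 𝓢(V, ℂ)) : 0 ≤ I2 s f :=
  integral_nonneg fun ξ => mul_nonneg (om_pos _ _).le (by positivity)

lemma jb_rpow (r : ℝ) (x : V) : jb x ^ r = om (r/2) x := by
  unfold jb om
  rw [← Real.rpow_mul (base_pos x).le]
  congr 1; ring

lemma Hnorm_eq (s : ℝ) (f : 𝓢(V, ℂ)) : Hnorm s (f : V → ℂ) = (I2 s f) ^ ((1:ℝ)/2) := by
  unfold Hnorm I2
  congr 1
  apply integral_congr_ae
  refine Filter.Eventually.of_forall fun ξ => ?_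
  simp only
  rw [jb_rpow, SchwartzMap.fourier_coe]
  congr 2; ring

lemma HnormW_eq (s l : ℝ) (f : 𝓢(V, ℂ)) :
    HnormW s l (f : V → ℂ) = (I2 s (M (omc (l/2)) f)) ^ ((1:ℝ)/2) := by
  unfold HnormW
  rw [← Hnorm_eq]
  congr 1
  funext v
  rw [M_apply (omc_htg _), jb_rpow, omc]

lemma I2_add (s : ℝ) (f g : 𝓢(V, ℂ)) : I2 s (f + g) ≤ 2 * I2 s f + 2 * I2 s g := by
  unfold I2
  rw [← integral_const_mul, ← integral_const_mul,
    ← integral_add ((wsq_int _ _).const_mul _) ((wsq_int _ _).const_mul _)]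
  apply integral_mono (wsq_int _ _)
    (((wsq_int _ _).const_mul _).add ((wsq_int _ _).const_mul _))
  intro ξ
  simp only [FourierTransform.fourier_add, Pi.add_apply, add_apply]
  have h1 := norm_add_le ((𝓕 f : 𝓢(V, ℂ)) ξ) ((𝓕 g : 𝓢(V, ℂ)) ξ)
  have h2 := om_pos s ξ
  have h3 : ‖(𝓕 f : 𝓢(V, ℂ)) ξ + (𝓕 g : 𝓢(V, ℂ)) ξ‖ ^ 2 ≤
      2 * ‖(𝓕 f : 𝓢(V, ℂ)) ξ‖ ^ 2 + 2 * ‖(𝓕 g : 𝓢(V, ℂ)) ξ‖ ^ 2 := by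
    have := norm_nonneg ((𝓕 f : 𝓢(V, ℂ)) ξ + (𝓕 g : 𝓢(V, ℂ)) ξ)
    nlinarith [sq_nonneg (‖(𝓕 f : 𝓢(V, ℂ)) ξ‖ - ‖(𝓕 g : 𝓢(V, ℂ)) ξ‖)]
  nlinarith [mul_le_mul_of_nonneg_left h3 h2.le]

def Mult (s : ℝ) (a : V → ℂ) (C : ℝ) : Prop := ∀ f : 𝓢(V, ℂ), I2 s (M a f) ≤ C * I2 s f

lemma Mult.mono {s : ℝ} {a : V → ℂ} {C D : ℝ} (h : Mult s a C) (hCD : C ≤ D) : Mult s a D :=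
  fun f => (h f).trans (mul_le_mul_of_nonneg_right hCD (I2_nonneg _ _))

lemma Mult.mul {s : ℝ} {a b : V → ℂ} {C D : ℝ} (hC : 0 ≤ C) (ha : a.HasTemperateGrowth)
    (hb : b.HasTemperateGrowth)
    (h : Mult s a C) (h' : Mult s b D) : Mult s (fun x => a x * b x) (C * D) := fun f => by
  have : M (fun x => a x * b x) f = M a (M b f) := by
    ext x
    rw [M_apply (by fun_prop), M_apply ha, M_apply hb, mul_assoc]
  rw [this]
  calc _ ≤ C * I2 s (M b f) := h _
    _ ≤ C * (D * I2 s f) := mul_le_mul_of_nonneg_left (h' f) hC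
    _ = _ := by ring

lemma Mult.add {s : ℝ} {a b : V → ℂ} {C D : ℝ} (ha : a.HasTemperateGrowth)
    (hb : b.HasTemperateGrowth)
    (h : Mult s a C) (h' : Mult s b D) : Mult s (fun x => a x + b x) (2 * C + 2 * D) := fun f => by
  have : M (fun x => a x + b x) f = M a f + M b f := by
    ext x
    rw [M_apply (by fun_prop), add_apply, M_apply ha, M_apply hb, add_mul]
  rw [this]
  have h1 := h f
  have h2 := h' f
  have h3 := I2_add s (M a f) (M b f)
  linarith

lemma Mult.const (s : ℝ) (c : ℂ) : Mult s (fun _ => c) (‖c‖ ^ 2) := fun f => by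
  have : M (fun _ => c) f = c • f := by
    ext x
    rw [M_apply (by fun_prop)]; simp
  rw [this]
  unfold I2
  rw [← integral_const_mul]
  apply le_of_eq
  congr 1
  funext ξ
  rw [FourierTransform.fourier_smul]
  simp only [smul_apply, norm_smul]
  ring

lemma Mult.zero_of_bdd {a : V → ℂ} {C : ℝ} (ha : a.HasTemperateGrowth) (h : ∀ x, ‖a x‖ ≤ C) :
    Mult 0 a (C ^ 2) := fun f => by
  unfold I2
  simp_rw [om_zero, one_mul]
  rw [SchwartzMap.integral_norm_sq_fourier, SchwartzMap.integral_norm_sq_fourier,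
    ← integral_const_mul]
  apply integral_mono (sq_int _) ((sq_int _).const_mul _)
  intro x
  simp only
  rw [M_apply ha, norm_mul, mul_pow]
  gcongr
  exact h x

def e (j : Fin 3) : V := EuclideanSpace.single j 1

lemma norm_fourier_deriv (f : 𝓢(V, ℂ)) (j : Fin 3) (ξ : V) :
    ‖(𝓕 (∂_{e j} f) : 𝓢(V, ℂ)) ξ‖ ^ 2 = (2 * π) ^ 2 * (ξ j ^ 2 * ‖(𝓕 f : 𝓢(V, ℂ)) ξ‖ ^ 2) := by
  have h : (fun x : V => inner ℝ x (e j)).HasTemperateGrowth := by fun_prop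
  have h2 : inner ℝ ξ (e j) = ξ j := by simp [e, EuclideanSpace.inner_single_right]
  rw [SchwartzMap.fourier_lineDerivOp_eq]
  simp only [smul_apply]
  rw [smulLeftCLM_apply_apply h, norm_smul, norm_smul, h2, mul_pow, mul_pow]
  simp [abs_of_pos Real.pi_pos]

lemma I2_succ (s : ℝ) (f : 𝓢(V, ℂ)) :
    I2 (s + 1) f = I2 s f + ((2 * π) ^ 2)⁻¹ * ∑ j, I2 s (∂_{e j} f) := by
  unfold I2
  rw [← integral_finsetSum _ (fun j _ => wsq_int _ _), ← integral_const_mul,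
    ← integral_add (wsq_int _ _) ((integrable_finsetSum _ (fun j _ => wsq_int _ _)).const_mul _)]
  congr 1
  funext ξ
  simp_rw [norm_fourier_deriv]
  rw [om_add, om_one, EuclideanSpace.norm_sq_eq, Fin.sum_univ_three, Fin.sum_univ_three]
  simp only [Real.norm_eq_abs, sq_abs]
  have : π ≠ 0 := Real.pi_ne_zero
  field_simp

lemma deriv_M {a a' : V → ℂ} (ha : a.HasTemperateGrowth) (ha' : a'.HasTemperateGrowth)
    (j : Fin 3) (hd : ∀ x, fderiv ℝ a x (e j) = a' x) (f : 𝓢(V, ℂ)) :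
    ∂_{e j} (M a f) = M a' f + M a (∂_{e j} f) := by
  ext x
  rw [add_apply, M_apply ha, M_apply ha', SchwartzMap.lineDerivOp_apply_eq_fderiv,
    SchwartzMap.lineDerivOp_apply_eq_fderiv]
  have : (M a f : V → ℂ) = fun x => a x * f x := funext (M_apply ha f)
  rw [this, fderiv_fun_mul (ha.1.differentiable (by simp) x) f.differentiableAt, ← hd]
  simp; ring

lemma Mult.succ {s : ℝ} {a : V → ℂ} {a' : Fin 3 → V → ℂ} {C D : ℝ} (ha : a.HasTemperateGrowth)
    (ha' : ∀ j, (a' j).HasTemperateGrowth) (hD : 0 ≤ D) (hC : 0 ≤ C)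
    (hd : ∀ j x, fderiv ℝ a x (e j) = a' j x) (h : Mult s a C) (h' : ∀ j, Mult s (a' j) D) :
    Mult (s + 1) a (3 * C + 6 * D) := fun f => by
  rw [I2_succ, I2_succ]
  set c := ((2 * π) ^ 2)⁻¹ with hc
  have hc0 : 0 ≤ c := by positivity
  have hc1 : c ≤ 1 := by
    apply inv_le_one_of_one_le₀
    nlinarith [Real.pi_gt_three]
  have key : ∀ j, I2 s (∂_{e j} (M a f)) ≤ 2 * D * I2 s f + 2 * C * I2 s (∂_{e j} f) := by
    intro j
    rw [deriv_M ha (ha' j) j (hd j)]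
    have h1 := I2_add s (M (a' j) f) (M a (∂_{e j} f))
    have h2 := h' j f
    have h3 := h (∂_{e j} f)
    linarith
  have hs : ∑ j, I2 s (∂_{e j} (M a f)) ≤ 6 * D * I2 s f + 2 * C * ∑ j, I2 s (∂_{e j} f) := by
    refine (Finset.sum_le_sum fun j _ => key j).trans (le_of_eq ?_)
    rw [Finset.sum_add_distrib, Finset.mul_sum]
    simp; ring
  have hS : 0 ≤ ∑ j, I2 s (∂_{e j} f) := Finset.sum_nonneg fun j _ => I2_nonneg _ _
  have h0 := I2_nonneg s f
  have h1 := h f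
  clear_value c
  clear key
  generalize (∑ j, I2 s (∂_{e j} f)) = S at *
  generalize (∑ j, I2 s (∂_{e j} (M a f))) = S' at *
  generalize I2 s f = A at *
  generalize I2 s (M a f) = A' at *
  have h2 := mul_le_mul_of_nonneg_left hs hc0
  have h3 : c * (6 * D * A) ≤ 1 * (6 * D * A) :=
    mul_le_mul_of_nonneg_right hc1 (by positivity)
  have h4 : 0 ≤ c * (C * S) := by positivity
  have h5 : 0 ≤ c * (D * S) := by positivity
  have h6 : 0 ≤ C * A := by positivity
  nlinarith


lemma om_hasFDerivAt (s : ℝ) (x : V) :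
    HasFDerivAt (om s) ((2 * s * om (s - 1) x) • innerSL ℝ x) x := by
  have h1 : HasFDerivAt (fun y : V => 1 + ‖y‖ ^ 2) (2 • innerSL ℝ x) x := by
    have := (hasStrictFDerivAt_norm_sq x).hasFDerivAt
    exact this.const_add 1
  have h2 := h1.rpow_const (p := s) (Or.inl (base_pos x).ne')
  refine h2.congr_fderiv ?_
  ext m
  simp [om]
  ring

def cc (x : V) : ℂ := omc (-1) x
def bb (j : Fin 3) (x : V) : ℂ := ((x j * om (-1) x : ℝ) : ℂ)

lemma cc_htg : cc.HasTemperateGrowth := omc_htg _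

lemma coord_htg (j : Fin 3) : (fun x : V => x j).HasTemperateGrowth :=
  (EuclideanSpace.proj j : V →L[ℝ] ℝ).hasTemperateGrowth

lemma bb_htg (j : Fin 3) : (bb j).HasTemperateGrowth := by
  have h := om_htg (-1)
  have h' := coord_htg j
  unfold bb
  fun_prop

lemma inner_e (x : V) (j : Fin 3) : inner ℝ x (e j) = x j := by
  simp [e, EuclideanSpace.inner_single_right]

lemma om_neg_two (x : V) : om (-1 - 1) x = om (-1) x * om (-1) x := by
  rw [← om_add]; congr 1

lemma cc_deriv (i : Fin 3) (x : V) : fderiv ℝ cc x (e i) = (-2) * (bb i x * cc x) := by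
  have h := (om_hasFDerivAt (-1) x)
  have h2 : HasFDerivAt cc _ x := (Complex.ofRealCLM.hasFDerivAt).comp x h
  rw [h2.fderiv]
  simp only [ContinuousLinearMap.comp_apply, smul_apply, innerSL_apply_apply,
    inner_e, om_neg_two, bb, cc, omc, Complex.ofRealCLM_apply, smul_eq_mul]
  push_cast
  ring

lemma bb_deriv (j i : Fin 3) (x : V) :
    fderiv ℝ (bb j) x (e i) = (if i = j then 1 else 0) * cc x + (-2) * (bb i x * bb j x) := by
  have h := (om_hasFDerivAt (-1) x)
  have h1 : HasFDerivAt (fun y : V => y j) (EuclideanSpace.proj j : V →L[ℝ] ℝ) x :=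
    (EuclideanSpace.proj j : V →L[ℝ] ℝ).hasFDerivAt
  have h2 : HasFDerivAt (bb j) _ x := (Complex.ofRealCLM.hasFDerivAt).comp x (h1.mul h)
  rw [h2.fderiv]
  simp only [ContinuousLinearMap.comp_apply, smul_apply, add_apply, innerSL_apply_apply,
    inner_e, om_neg_two, bb, cc, omc, Complex.ofRealCLM_apply, smul_eq_mul]
  have h3 : (EuclideanSpace.proj j : V →L[ℝ] ℝ) (e i) = if i = j then 1 else 0 := by
    simp [e, eq_comm]
  rw [h3]
  push_cast
  split_ifs <;> simp <;> ring

lemma om_neg_one (x : V) : om (-1) x = (1 + ‖x‖ ^ 2)⁻¹ := Real.rpow_neg_one _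

lemma cc_bdd (x : V) : ‖cc x‖ ≤ 1 := by
  rw [cc, omc, Complex.norm_real, Real.norm_of_nonneg (om_pos _ _).le, om_neg_one]
  apply inv_le_one_of_one_le₀
  nlinarith [sq_nonneg ‖x‖]

lemma bb_bdd (j : Fin 3) (x : V) : ‖bb j x‖ ≤ 1 := by
  rw [bb, Complex.norm_real, norm_mul, Real.norm_of_nonneg (om_pos (-1) x).le, om_neg_one,
    ← div_eq_mul_inv, div_le_one (base_pos x)]
  have := EuclideanSpace.norm_sq_eq x
  have h2 : ‖x j‖ ^ 2 ≤ ‖x‖ ^ 2 := by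
    rw [this]
    exact Finset.single_le_sum (f := fun i => ‖x i‖ ^ 2) (fun i _ => by positivity) (Finset.mem_univ j)
  nlinarith [sq_nonneg (‖x j‖ - 1)]

lemma mult_cb (n : ℕ) : ∃ C, 0 ≤ C ∧ Mult n cc C ∧ ∀ j, Mult n (bb j) C := by
  induction n with
  | zero =>
    refine ⟨1, by norm_num, ?_, fun j => ?_⟩
    · simpa using Mult.zero_of_bdd cc_htg cc_bdd
    · simpa using Mult.zero_of_bdd (bb_htg j) (bb_bdd j)
  | succ n ih =>
    obtain ⟨C, hC, h1, h2⟩ := ih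
    have hcc := cc_htg
    have hbb := bb_htg
    have k1 : ∀ i, Mult n (fun x => (-2) * (bb i x * cc x)) (‖(-2 : ℂ)‖ ^ 2 * (C * C)) := fun i =>
      Mult.mul (by positivity) (by fun_prop) (by fun_prop) (Mult.const _ _)
        (Mult.mul hC (hbb i) hcc (h2 i) h1)
    have k2 : ∀ i j, Mult n (fun x => (-2) * (bb i x * bb j x)) (‖(-2 : ℂ)‖ ^ 2 * (C * C)) :=
      fun i j => Mult.mul (by positivity) (by fun_prop) (by fun_prop) (Mult.const _ _)
        (Mult.mul hC (hbb i) (hbb j) (h2 i) (h2 j))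
    have k3 : ∀ i j : Fin 3, Mult n (fun x => (if i = j then 1 else 0) * cc x) (1 * C) :=
      fun i j => Mult.mul (by norm_num) (by fun_prop) (by fun_prop)
        ((Mult.const n (if i = j then 1 else 0)).mono (by split_ifs <;> simp)) h1
    have k4 : ∀ i j : Fin 3, Mult n (fun x => (if i = j then 1 else 0) * cc x +
        (-2) * (bb i x * bb j x)) (2 * (1 * C) + 2 * (‖(-2 : ℂ)‖ ^ 2 * (C * C))) :=
      fun i j => Mult.add (by fun_prop) (by fun_prop) (k3 i j) (k2 i j)
    refine ⟨3 * C + 6 * (2 * (1 * C) + 2 * (‖(-2 : ℂ)‖ ^ 2 * (C * C))), by positivity, ?_, ?_⟩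
    · push_cast
      refine Mult.succ hcc (a' := fun i x => (-2) * (bb i x * cc x)) (fun i => by fun_prop)
        (by positivity) hC (fun i x => cc_deriv i x) h1 (fun i => (k1 i).mono ?_)
      have : 0 ≤ ‖(-2 : ℂ)‖ ^ 2 * (C * C) := by positivity
      linarith
    · intro j
      push_cast
      exact Mult.succ (hbb j) (a' := fun i x => (if i = j then 1 else 0) * cc x +
        (-2) * (bb i x * bb j x)) (fun i => by fun_prop)
        (by positivity) hC (fun i x => bb_deriv j i x) (h2 j) (fun i => k4 i j)

def Lg (x : V) : ℝ := Real.log (1 + ‖x‖ ^ 2)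

lemma Lg_nonneg (x : V) : 0 ≤ Lg x := Real.log_nonneg (by nlinarith [sq_nonneg ‖x‖])

lemma om_eq (s : ℝ) (x : V) : om s x = Real.exp (s * Lg x) := by
  rw [om, Real.rpow_def_of_pos (base_pos x), Lg, mul_comm]

lemma Lg_hasFDerivAt (x : V) : HasFDerivAt Lg ((2 * om (-1) x) • innerSL ℝ x) x := by
  have h1 : HasFDerivAt (fun y : V => 1 + ‖y‖ ^ 2) (2 • innerSL ℝ x) x := by
    have := (hasStrictFDerivAt_norm_sq x).hasFDerivAt
    exact this.const_add 1
  have h2 := h1.log (base_pos x).ne'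
  refine h2.congr_fderiv ?_
  ext m
  simp [om_neg_one]
  ring

lemma Lg_htg : Lg.HasTemperateGrowth := by
  apply Function.HasTemperateGrowth.of_fderiv (k := 2) (C := 1)
  · have : fderiv ℝ Lg = fun x => (2 * om (-1) x) • innerSL ℝ x :=
      funext fun x => (Lg_hasFDerivAt x).fderiv
    rw [this]
    have h := om_htg (-1)
    have h' := (innerSL ℝ (E := V)).hasTemperateGrowth
    fun_prop
  · exact fun x => (Lg_hasFDerivAt x).differentiableAt
  · intro x
    rw [Real.norm_of_nonneg (Lg_nonneg x)]
    have := Real.log_le_sub_one_of_pos (base_pos x)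
    unfold Lg
    nlinarith [norm_nonneg x]

lemma cexp_htg (c : ℝ) : (fun t : ℝ => Complex.exp (Complex.I * c * t)).HasTemperateGrowth := by
  have hd : ∀ n : ℕ, iteratedDeriv n (fun t : ℝ => Complex.exp (Complex.I * c * t)) =
      fun t : ℝ => (Complex.I * c) ^ n * Complex.exp (Complex.I * c * t) := by
    intro n
    induction n with
    | zero => simp
    | succ n ih =>
      rw [iteratedDeriv_succ, ih]
      funext t
      have h1 : HasDerivAt (fun t : ℝ => Complex.I * c * (t : ℂ)) (Complex.I * c) t := by
        simpa using (Complex.ofRealCLM.hasDerivAt (x := t)).const_mul (Complex.I * c)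
      rw [(h1.cexp.const_mul _).deriv]
      ring
  refine ⟨?_, fun n => ⟨0, |c| ^ n, fun t => ?_⟩⟩
  · exact (contDiff_const.mul Complex.ofRealCLM.contDiff).cexp
  · rw [norm_iteratedFDeriv_eq_norm_iteratedDeriv, hd]
    simp [Complex.norm_exp]

/-- the imaginary powers of the weight -/
def EE (τ : ℝ) (x : V) : ℂ := Complex.exp (Complex.I * τ * Lg x)

lemma EE_htg (τ : ℝ) : (EE τ).HasTemperateGrowth := (cexp_htg τ).comp Lg_htg

lemma EE_norm (τ : ℝ) (x : V) : ‖EE τ x‖ = 1 := by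
  simp [EE, Complex.norm_exp]

lemma EE_deriv (τ : ℝ) (i : Fin 3) (x : V) :
    fderiv ℝ (EE τ) x (e i) = (2 * Complex.I * τ) * (bb i x * EE τ x) := by
  have h := Lg_hasFDerivAt x
  have h2 : HasFDerivAt (fun x => (Lg x : ℂ)) _ x := (Complex.ofRealCLM.hasFDerivAt).comp x h
  have h3 : HasFDerivAt (EE τ) _ x := (h2.const_mul (Complex.I * τ)).cexp
  rw [h3.fderiv]
  simp only [ContinuousLinearMap.comp_apply, smul_apply, innerSL_apply_apply,
    inner_e, bb, EE, Complex.ofRealCLM_apply, smul_eq_mul]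
  push_cast
  ring

lemma mult_E (n : ℕ) : ∃ K, 0 ≤ K ∧ ∀ τ, Mult n (EE τ) (K * (1 + τ ^ 2) ^ n) := by
  induction n with
  | zero =>
    refine ⟨1, by norm_num, fun τ => ?_⟩
    simpa using Mult.zero_of_bdd (EE_htg τ) (fun x => (EE_norm τ x).le)
  | succ n ih =>
    obtain ⟨K, hK, h1⟩ := ih
    obtain ⟨C, hC, -, h2⟩ := mult_cb n
    refine ⟨3 * K + 24 * C * K, by positivity, fun τ => ?_⟩
    have hE := EE_htg τ
    have hbb := bb_htg
    have k1 : ∀ i, Mult n (fun x => (2 * Complex.I * τ) * (bb i x * EE τ x))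
        (‖(2 * Complex.I * τ : ℂ)‖ ^ 2 * (C * (K * (1 + τ ^ 2) ^ n))) := fun i =>
      Mult.mul (by positivity) (by fun_prop) (by fun_prop) (Mult.const _ _)
        (Mult.mul hC (hbb i) hE (h2 i) (h1 τ))
    push_cast
    refine (Mult.succ hE (a' := fun i x => (2 * Complex.I * τ) * (bb i x * EE τ x))
      (fun i => by fun_prop) (by positivity) (by positivity) (fun i x => EE_deriv τ i x)
      (h1 τ) k1).mono ?_
    have : ‖(2 * Complex.I * τ : ℂ)‖ ^ 2 = 4 * τ ^ 2 := by
      simp [mul_pow]; norm_num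
    rw [this, pow_succ (1 + τ ^ 2) n]
    have h3 : 0 ≤ K * (1 + τ ^ 2) ^ n := by positivity
    have h4 : 0 ≤ C * (K * (1 + τ ^ 2) ^ n) := by positivity
    nlinarith [mul_nonneg h3 (sq_nonneg τ), mul_nonneg h4 (sq_nonneg τ)]


lemma I2_int (s : ℝ) (f : 𝓢(V, ℂ)) :
    Integrable (fun ξ => om s ξ * ‖(𝓕 f : 𝓢(V, ℂ)) ξ‖ ^ 2) := wsq_int _ _

lemma omc_norm (s : ℝ) (x : V) : ‖omc s x‖ = om s x := by
  rw [omc, Complex.norm_real, Real.norm_of_nonneg (om_pos _ _).le]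

lemma om_neg_mul (s : ℝ) (x : V) : om s x * om (-s) x = 1 := by
  rw [← om_add, add_neg_cancel, om_zero]

lemma Mult.dual {s : ℝ} {a a' : V → ℂ} {C : ℝ} (ha : a.HasTemperateGrowth)
    (ha' : a'.HasTemperateGrowth) (hconj : ∀ x, a' x = (starRingEnd ℂ) (a x)) (hC : 0 < C)
    (h : Mult s a' C) : Mult (-s) a C := fun f => by
  set F : 𝓢(V, ℂ) := 𝓕 (M a f) with hF
  set g : 𝓢(V, ℂ) := 𝓕⁻ (M (omc (-s)) F) with hg
  have hFg : 𝓕 g = M (omc (-s)) F := by rw [hg, FourierTransform.fourier_fourierInv_eq]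
  have hgP : I2 s g = I2 (-s) (M a f) := by
    unfold I2
    rw [hFg, ← hF]
    congr 1
    funext ξ
    rw [M_apply (omc_htg _), norm_mul, omc_norm, mul_pow, sq (om (-s) ξ)]
    have := om_neg_mul s ξ
    linear_combination (om (-s) ξ * ‖F ξ‖ ^ 2) * this
  have h1 : ∫ ξ, inner ℂ ((𝓕 g : 𝓢(V, ℂ)) ξ) (F ξ) = ((I2 (-s) (M a f) : ℝ) : ℂ) := by
    rw [I2, ← hF, ← integral_complex_ofReal]
    congr 1
    funext ξ
    rw [hFg, M_apply (omc_htg _), RCLike.inner_apply, map_mul, omc, Complex.conj_ofReal]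
    push_cast
    rw [← Complex.mul_conj']
    ring
  have h2 : ∫ ξ, inner ℂ ((𝓕 g : 𝓢(V, ℂ)) ξ) (F ξ)
      = ∫ ξ, inner ℂ ((𝓕 (M a' g) : 𝓢(V, ℂ)) ξ) ((𝓕 f : 𝓢(V, ℂ)) ξ) := by
    rw [hF, SchwartzMap.integral_inner_fourier_fourier, SchwartzMap.integral_inner_fourier_fourier]
    congr 1
    funext x
    rw [M_apply ha, M_apply ha', RCLike.inner_apply, RCLike.inner_apply, hconj]
    simp
    ring
  have h3 : I2 (-s) (M a f) ≤ ∫ ξ, (C⁻¹ / 2 * (om s ξ * ‖(𝓕 (M a' g) : 𝓢(V, ℂ)) ξ‖ ^ 2) +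
      C / 2 * (om (-s) ξ * ‖(𝓕 f : 𝓢(V, ℂ)) ξ‖ ^ 2)) := by
    have h4 : I2 (-s) (M a f) = ‖∫ ξ, inner ℂ ((𝓕 (M a' g) : 𝓢(V, ℂ)) ξ) ((𝓕 f : 𝓢(V, ℂ)) ξ)‖ := by
      rw [← h2, h1, Complex.norm_real, Real.norm_of_nonneg (I2_nonneg _ _)]
    rw [h4]
    apply norm_integral_le_of_norm_le
    · exact ((I2_int _ _).const_mul _).add ((I2_int _ _).const_mul _)
    · refine Filter.Eventually.of_forall fun ξ => ?_
      refine (norm_inner_le_norm _ _).trans ?_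
      generalize ‖(𝓕 (M a' g) : 𝓢(V, ℂ)) ξ‖ = X
      generalize ‖(𝓕 f : 𝓢(V, ℂ)) ξ‖ = Y
      have h5 := om_neg_mul s ξ
      have h6 := om_pos s ξ
      have h7 : om (-s) ξ = (om s ξ)⁻¹ := eq_inv_of_mul_eq_one_right h5
      rw [h7]
      generalize om s ξ = w at *
      have : C⁻¹ / 2 * (w * X ^ 2) + C / 2 * (w⁻¹ * Y ^ 2) - X * Y
        = (w * X - C * Y) ^ 2 / (2 * C * w) := by
        field_simp
        ring
      have h8 : 0 ≤ (w * X - C * Y) ^ 2 / (2 * C * w) := by positivity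
      linarith
  rw [integral_add ((I2_int _ _).const_mul _) ((I2_int _ _).const_mul _), integral_const_mul,
    integral_const_mul] at h3
  have h9 : I2 s (M a' g) ≤ C * I2 (-s) (M a f) := hgP ▸ h g
  change I2 (-s) (M a f) ≤ C⁻¹ / 2 * I2 s (M a' g) + C / 2 * I2 (-s) f at h3
  have h10 : C⁻¹ / 2 * I2 s (M a' g) ≤ C⁻¹ / 2 * (C * I2 (-s) (M a f)) :=
    mul_le_mul_of_nonneg_left h9 (by positivity)
  have h11 : C⁻¹ / 2 * (C * I2 (-s) (M a f)) = I2 (-s) (M a f) / 2 := by field_simp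
  linarith

/-- resolvent symbol -/
def rs (t : ℝ) (ξ : V) : ℂ := (((1 + t * om 1 ξ)⁻¹ : ℝ) : ℂ)

lemma rs_htg {t : ℝ} (ht : 0 < t) : (rs t).HasTemperateGrowth := by
  have h1 : rs t = fun ξ => (((1 + t)⁻¹ * om (-1) (√(t / (1 + t)) • ξ) : ℝ) : ℂ) := by
    funext ξ
    rw [rs, om_neg_one, om_one, norm_smul, mul_pow, Real.norm_eq_abs, sq_abs,
      Real.sq_sqrt (by positivity), ← mul_inv]
    congr 2
    field_simp
    ring
  have h2 : (fun ξ : V => om (-1) (√(t / (1 + t)) • ξ)).HasTemperateGrowth :=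
    (om_htg (-1)).comp (by fun_prop)
  rw [h1]
  fun_prop

/-- the quadratic K functional -/
def Kf (s t : ℝ) (f : 𝓢(V, ℂ)) : ℝ :=
  ∫ ξ, (t * om 1 ξ / (1 + t * om 1 ξ)) * (om s ξ * ‖(𝓕 f : 𝓢(V, ℂ)) ξ‖ ^ 2)

lemma Kf_int (s : ℝ) {t : ℝ} (ht : 0 < t) (f : 𝓢(V, ℂ)) :
    Integrable (fun ξ => (t * om 1 ξ / (1 + t * om 1 ξ)) *
      (om s ξ * ‖(𝓕 f : 𝓢(V, ℂ)) ξ‖ ^ 2)) := by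
  have hc : Continuous fun ξ => t * om 1 ξ / (1 + t * om 1 ξ) := by
    have := om_cont 1
    refine Continuous.div (by fun_prop) (by fun_prop) fun ξ => ?_
    have := om_pos 1 ξ
    positivity
  refine (I2_int s f).bdd_mul (c := 1) hc.aestronglyMeasurable
    (Filter.Eventually.of_forall fun ξ => ?_)
  have := om_pos 1 ξ
  rw [Real.norm_of_nonneg (by positivity), div_le_one (by positivity)]
  linarith

lemma Kf_le {s t C : ℝ} {a : V → ℂ} (ht : 0 < t)
    (h0 : Mult s a C) (h1 : Mult (s + 1) a C) (f : 𝓢(V, ℂ)) :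
    Kf s t (M a f) ≤ C * Kf s t f := by
  set f1 : 𝓢(V, ℂ) := 𝓕⁻ (M (rs t) (𝓕 f)) with hf1
  set f0 := f - f1 with hf0
  have hF1 : ∀ ξ, (𝓕 f1 : 𝓢(V, ℂ)) ξ = rs t ξ * (𝓕 f : 𝓢(V, ℂ)) ξ := by
    intro ξ
    rw [hf1, FourierTransform.fourier_fourierInv_eq, M_apply (rs_htg ht)]
  have hF0 : ∀ ξ, (𝓕 f0 : 𝓢(V, ℂ)) ξ = (1 - rs t ξ) * (𝓕 f : 𝓢(V, ℂ)) ξ := by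
    intro ξ
    have : (𝓕 f0 : 𝓢(V, ℂ)) = 𝓕 f - 𝓕 f1 := by
      rw [hf0, sub_eq_add_neg, FourierTransform.fourier_add, FourierTransform.fourier_neg,
        sub_eq_add_neg]
    rw [this, sub_apply, hF1]; ring
  have hsum : M a f = M a f0 + M a f1 := by rw [← M_add, hf0, sub_add_cancel]
  have e1 : Kf s t f = I2 s f0 + t * I2 (s + 1) f1 := by
    unfold Kf I2
    rw [← integral_const_mul, ← integral_add (I2_int _ _) ((I2_int _ _).const_mul _)]
    congr 1
    funext ξ
    have hr : (1 - rs t ξ) = ((1 - (1 + t * om 1 ξ)⁻¹ : ℝ) : ℂ) := by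
      rw [rs]; push_cast; ring
    rw [hF0, hF1, norm_mul, norm_mul, hr, rs, Complex.norm_real, Complex.norm_real, mul_pow,
      mul_pow, Real.norm_eq_abs, Real.norm_eq_abs, sq_abs, sq_abs, om_add s 1]
    have := om_pos 1 ξ
    generalize om 1 ξ = q at *
    field_simp
    ring
  have e2 : Kf s t (M a f) ≤ I2 s (M a f0) + t * I2 (s + 1) (M a f1) := by
    unfold Kf I2
    rw [← integral_const_mul, ← integral_add (I2_int _ _) ((I2_int _ _).const_mul _)]
    apply integral_mono (Kf_int s ht _) ((I2_int _ _).add ((I2_int _ _).const_mul _))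
    intro ξ
    simp only [Pi.add_apply]
    rw [hsum, FourierTransform.fourier_add, add_apply, om_add s 1]
    have h := norm_add_le ((𝓕 (M a f0) : 𝓢(V, ℂ)) ξ) ((𝓕 (M a f1) : 𝓢(V, ℂ)) ξ)
    have hn := norm_nonneg ((𝓕 (M a f0) : 𝓢(V, ℂ)) ξ + (𝓕 (M a f1) : 𝓢(V, ℂ)) ξ)
    generalize ‖(𝓕 (M a f0) : 𝓢(V, ℂ)) ξ + (𝓕 (M a f1) : 𝓢(V, ℂ)) ξ‖ = Z at *
    generalize ‖(𝓕 (M a f0) : 𝓢(V, ℂ)) ξ‖ = X at *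
    generalize ‖(𝓕 (M a f1) : 𝓢(V, ℂ)) ξ‖ = Y at *
    have p1 := om_pos 1 ξ
    have p2 := om_pos s ξ
    generalize om 1 ξ = q at *
    generalize om s ξ = w at *
    have hZ : Z ^ 2 ≤ (X + Y) ^ 2 := by gcongr
    have k : t * q / (1 + t * q) * (X + Y) ^ 2 ≤ X ^ 2 + t * q * Y ^ 2 := by
      rw [div_mul_eq_mul_div, div_le_iff₀ (by positivity)]
      nlinarith [sq_nonneg (X - t * q * Y)]
    calc t * q / (1 + t * q) * (w * Z ^ 2) ≤ t * q / (1 + t * q) * (w * (X + Y) ^ 2) := by gcongr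
      _ = w * (t * q / (1 + t * q) * (X + Y) ^ 2) := by ring
      _ ≤ w * (X ^ 2 + t * q * Y ^ 2) := by gcongr
      _ = _ := by ring
  have e3 := h0 f0
  have e4 := mul_le_mul_of_nonneg_left (h1 f1) ht.le
  rw [e1]
  linarith


def ph (θ s : ℝ) : ℝ := s ^ (-θ - 1) * (s / (1 + s))

lemma ph_meas (θ : ℝ) : Measurable (ph θ) := by unfold ph; fun_prop

lemma ph_pos (θ : ℝ) {s : ℝ} (hs : 0 < s) : 0 < ph θ s := by unfold ph; positivity

lemma ph_int {θ : ℝ} (h0 : 0 < θ) (h1 : θ < 1) : IntegrableOn (ph θ) (Set.Ioi 0) := by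
  rw [← Set.Ioc_union_Ioi_eq_Ioi (zero_le_one (α := ℝ))]
  refine IntegrableOn.union ?_ ?_
  · have : IntegrableOn (fun s : ℝ => s ^ (-θ)) (Set.Ioc 0 1) :=
      (intervalIntegrable_iff_integrableOn_Ioc_of_le zero_le_one).1
        (intervalIntegral.intervalIntegrable_rpow' (by linarith))
    refine Integrable.mono' this (ph_meas θ).aestronglyMeasurable ?_
    refine (ae_restrict_iff' measurableSet_Ioc).2 (Filter.Eventually.of_forall fun s hs => ?_)
    have hs0 := hs.1
    rw [Real.norm_of_nonneg (ph_pos θ hs0).le, ph, Real.rpow_sub_one hs0.ne']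
    have : s ^ (-θ) / s * (s / (1 + s)) = s ^ (-θ) / (1 + s) := by field_simp
    rw [this]
    exact div_le_self (by positivity) (by linarith)
  · have : IntegrableOn (fun s : ℝ => s ^ (-θ - 1)) (Set.Ioi 1) :=
      integrableOn_Ioi_rpow_of_lt (by linarith) one_pos
    refine Integrable.mono' this (ph_meas θ).aestronglyMeasurable ?_
    refine (ae_restrict_iff' measurableSet_Ioi).2 (Filter.Eventually.of_forall fun s hs => ?_)
    have hs0 : 0 < s := lt_trans one_pos hs
    rw [Real.norm_of_nonneg (ph_pos θ hs0).le, ph]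
    apply mul_le_of_le_one_right (by positivity)
    rw [div_le_one (by positivity)]
    linarith

def JJ (θ : ℝ) : ℝ := ∫ s in Set.Ioi 0, ph θ s

lemma JJ_pos {θ : ℝ} (h0 : 0 < θ) (h1 : θ < 1) : 0 < JJ θ := by
  unfold JJ
  rw [setIntegral_pos_iff_support_of_nonneg_ae]
  · have : Function.support (ph θ) ∩ Set.Ioi 0 = Set.Ioi 0 := by
      apply Set.inter_eq_right.2
      intro s hs
      exact (ph_pos θ hs).ne'
    rw [this]
    simp
  · exact (ae_restrict_iff' measurableSet_Ioi).2
      (Filter.Eventually.of_forall fun s hs => (ph_pos θ hs).le)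
  · exact ph_int h0 h1

lemma ph_scale (θ : ℝ) {q t : ℝ} (hq : 0 < q) (ht : 0 < t) :
    t ^ (-θ - 1) * (t * q / (1 + t * q)) = q ^ (θ + 1) * ph θ (q * t) := by
  unfold ph
  rw [Real.mul_rpow hq.le ht.le]
  have : q ^ (θ + 1) * q ^ (-θ - 1) = 1 := by
    rw [← Real.rpow_add hq]; simp
  rw [mul_comm t q]
  linear_combination (-(t ^ (-θ - 1) * (q * t / (1 + q * t)))) * this

lemma lint_scale {θ : ℝ} (h0 : 0 < θ) (h1 : θ < 1) {q : ℝ} (hq : 0 < q) :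
    ∫⁻ t in Set.Ioi (0:ℝ), ENNReal.ofReal (t ^ (-θ - 1) * (t * q / (1 + t * q)))
      = ENNReal.ofReal (q ^ θ * JJ θ) := by
  have e1 : ∫⁻ t in Set.Ioi (0:ℝ), ENNReal.ofReal (t ^ (-θ - 1) * (t * q / (1 + t * q)))
      = ∫⁻ t in Set.Ioi (0:ℝ), ENNReal.ofReal (q ^ (θ + 1) * ph θ (q * t)) := by
    refine setLIntegral_congr_fun measurableSet_Ioi fun t ht => ?_
    rw [ph_scale θ hq ht]
  have hi : IntegrableOn (fun t => q ^ (θ + 1) * ph θ (q * t)) (Set.Ioi 0) := by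
    apply Integrable.const_mul
    have := (integrableOn_Ioi_comp_mul_left_iff (ph θ) 0 hq).2
    exact this (by simpa using ph_int h0 h1)
  rw [e1, ← ofReal_integral_eq_lintegral_ofReal hi]
  · congr 1
    rw [integral_const_mul, integral_comp_mul_left_Ioi (ph θ) 0 hq, mul_zero, JJ,
      Real.rpow_add hq, Real.rpow_one, smul_eq_mul]
    field_simp
  · exact (ae_restrict_iff' measurableSet_Ioi).2 (Filter.Eventually.of_forall fun t ht => by
      have := ph_pos θ (mul_pos hq ht)
      simp only [Pi.zero_apply]
      positivity)

lemma om_mul (θ : ℝ) (x : V) : om 1 x ^ θ = om θ x := by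
  rw [om_one]; rfl

lemma Kf_formula {θ : ℝ} (h0 : 0 < θ) (h1 : θ < 1) (s : ℝ) (f : 𝓢(V, ℂ)) :
    ENNReal.ofReal (JJ θ * I2 (s + θ) f) =
      ∫⁻ t in Set.Ioi (0:ℝ), ENNReal.ofReal (t ^ (-θ - 1) * Kf s t f) := by
  have hcF : Continuous (fun ξ => (𝓕 f : 𝓢(V, ℂ)) ξ) := SchwartzMap.continuous _
  have e1 : ENNReal.ofReal (JJ θ * I2 (s + θ) f) = ∫⁻ ξ, ∫⁻ t in Set.Ioi (0:ℝ),
      ENNReal.ofReal (t ^ (-θ - 1) * (t * om 1 ξ / (1 + t * om 1 ξ))) *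
        ENNReal.ofReal (om s ξ * ‖(𝓕 f : 𝓢(V, ℂ)) ξ‖ ^ 2) := by
    rw [I2, ← integral_const_mul, ofReal_integral_eq_lintegral_ofReal ((I2_int _ _).const_mul _)]
    · congr 1
      funext ξ
      rw [lintegral_mul_const' _ _ ENNReal.ofReal_ne_top, lint_scale h0 h1 (om_pos 1 ξ),
        ← ENNReal.ofReal_mul (by
          have := om_pos 1 ξ
          have := JJ_pos h0 h1
          positivity), om_add, om_mul]
      congr 1
      ring
    · refine Filter.Eventually.of_forall fun ξ => ?_
      have := om_pos (s + θ) ξ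
      have := JJ_pos h0 h1
      simp only [Pi.zero_apply]
      positivity
  rw [e1, lintegral_lintegral_swap]
  · refine setLIntegral_congr_fun measurableSet_Ioi fun t ht => ?_
    have ht' : 0 < t := ht
    rw [Kf, ← integral_const_mul, ofReal_integral_eq_lintegral_ofReal ((Kf_int s ht f).const_mul _)]
    · congr 1
      funext ξ
      have := om_pos 1 ξ
      rw [← ENNReal.ofReal_mul (by positivity)]
      congr 1
      ring
    · refine Filter.Eventually.of_forall fun ξ => ?_
      have := om_pos s ξ
      have := om_pos 1 ξ
      simp only [Pi.zero_apply]
      positivity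
  · apply Measurable.aemeasurable
    have m1 := (om_cont 1).measurable
    have m2 := (om_cont s).measurable
    have m3 := hcF.measurable
    unfold Function.uncurry
    fun_prop

lemma Mult.interp {θ s C : ℝ} {a : V → ℂ} (h0 : 0 < θ) (h1 : θ < 1) (hC : 0 ≤ C)
    (hs : Mult s a C) (hs1 : Mult (s + 1) a C) : Mult (s + θ) a C := fun f => by
  have hJ := JJ_pos h0 h1
  have h : ENNReal.ofReal (JJ θ * I2 (s + θ) (M a f)) ≤
      ENNReal.ofReal (C * (JJ θ * I2 (s + θ) f)) := by
    rw [ENNReal.ofReal_mul hC, Kf_formula h0 h1, Kf_formula h0 h1,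
      ← lintegral_const_mul' _ _ ENNReal.ofReal_ne_top]
    refine setLIntegral_mono' measurableSet_Ioi fun t ht => ?_
    rw [← ENNReal.ofReal_mul hC]
    apply ENNReal.ofReal_le_ofReal
    have ht' : 0 < t := ht
    have := mul_le_mul_of_nonneg_left (Kf_le ht' hs hs1 f)
      (show 0 ≤ t ^ (-θ - 1) by positivity)
    linarith
  rw [ENNReal.ofReal_le_ofReal_iff
    (mul_nonneg hC (mul_nonneg hJ.le (I2_nonneg _ _)))] at h
  have h2 : JJ θ * I2 (s + θ) (M a f) ≤ JJ θ * (C * I2 (s + θ) f) := by linarith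
  exact le_of_mul_le_mul_left h2 hJ

lemma mult_E_nonneg {p : ℝ} (hp : 0 ≤ p) :
    ∃ K, ∃ n : ℕ, 0 < K ∧ ∀ τ, Mult p (EE τ) (K * (1 + τ ^ 2) ^ n) := by
  set m := ⌊p⌋₊ with hm
  obtain ⟨K1, hK1, h1⟩ := mult_E m
  obtain ⟨K2, hK2, h2⟩ := mult_E (m + 1)
  refine ⟨K1 + K2 + 1, m + 1, by positivity, fun τ => ?_⟩
  have hb : (1:ℝ) ≤ 1 + τ ^ 2 := by nlinarith [sq_nonneg τ]
  have k1 : Mult m (EE τ) ((K1 + K2 + 1) * (1 + τ ^ 2) ^ (m + 1)) := by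
    refine (h1 τ).mono ?_
    gcongr
    · linarith
    · omega
  have k2 : Mult (m + 1) (EE τ) ((K1 + K2 + 1) * (1 + τ ^ 2) ^ (m + 1)) := by
    have := h2 τ
    push_cast at this
    refine this.mono ?_
    gcongr
    linarith
  have hle : (m : ℝ) ≤ p := Nat.floor_le hp
  have hlt : p < m + 1 := Nat.lt_floor_add_one p
  rcases eq_or_lt_of_le hle with h | h
  · rw [← h]; exact k1
  · have := Mult.interp (θ := p - m) (by linarith) (by linarith) (by positivity) k1 k2
    simpa using this

lemma EE_conj (τ : ℝ) (x : V) : EE (-τ) x = (starRingEnd ℂ) (EE τ x) := by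
  unfold EE
  rw [← Complex.exp_conj]
  simp

lemma mult_E_all (p : ℝ) :
    ∃ K, ∃ n : ℕ, 0 < K ∧ ∀ τ, Mult p (EE τ) (K * (1 + τ ^ 2) ^ n) := by
  rcases le_total 0 p with hp | hp
  · exact mult_E_nonneg hp
  · obtain ⟨K, n, hK, h⟩ := mult_E_nonneg (p := -p) (by linarith)
    refine ⟨K, n, hK, fun τ => ?_⟩
    have := h (-τ)
    have h3 := Mult.dual (EE_htg τ) (EE_htg (-τ)) (EE_conj τ) (by positivity) this
    simpa using h3


section param
variable {α : Type*} [MeasurableSpace α] {μ : Measure α}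

lemma cexp_norm_le (z : ℂ) (r R : ℝ) (h : |z.re| ≤ R) :
    ‖Complex.exp (z * (r : ℂ))‖ ≤ Real.exp (R * |r|) := by
  rw [Complex.norm_exp]
  apply Real.exp_le_exp.2
  rw [Complex.re_mul_ofReal]
  calc z.re * r ≤ |z.re * r| := le_abs_self _
    _ = |z.re| * |r| := abs_mul _ _
    _ ≤ _ := by gcongr

lemma param_int {Ψ : α → ℂ} {φ : α → ℝ} (hφ : AEStronglyMeasurable φ μ)
    (hΨ : AEStronglyMeasurable Ψ μ)
    (hInteg : ∀ R : ℝ, 0 ≤ R → Integrable (fun p => ‖Ψ p‖ * Real.exp (R * |φ p|)) μ) (z : ℂ) :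
    Integrable (fun p => Ψ p * Complex.exp (z * (φ p : ℂ))) μ := by
  have m : AEStronglyMeasurable (fun p => Complex.exp (z * (φ p : ℂ))) μ :=
    (show Continuous fun r : ℝ => Complex.exp (z * (r : ℂ)) by fun_prop).comp_aestronglyMeasurable hφ
  refine (hInteg |z.re| (abs_nonneg _)).mono' (hΨ.mul m)
    (Filter.Eventually.of_forall fun p => ?_)
  rw [norm_mul]
  gcongr
  exact cexp_norm_le z _ _ le_rfl

lemma param_diff {Ψ : α → ℂ} {φ : α → ℝ} (hφ : AEStronglyMeasurable φ μ)
    (hΨ : AEStronglyMeasurable Ψ μ)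
    (hInteg : ∀ R : ℝ, 0 ≤ R → Integrable (fun p => ‖Ψ p‖ * Real.exp (R * |φ p|)) μ) :
    Differentiable ℂ (fun z : ℂ => ∫ p, Ψ p * Complex.exp (z * (φ p : ℂ)) ∂μ) := by
  intro z
  have m : ∀ z : ℂ, AEStronglyMeasurable (fun p => Complex.exp (z * (φ p : ℂ))) μ := fun z =>
    (show Continuous fun r : ℝ => Complex.exp (z * (r : ℂ)) by fun_prop).comp_aestronglyMeasurable hφ
  have m2 : AEStronglyMeasurable (fun p => (φ p : ℂ)) μ :=
    Complex.continuous_ofReal.comp_aestronglyMeasurable hφ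
  have := hasDerivAt_integral_of_dominated_loc_of_deriv_le (μ := μ) (𝕜 := ℂ)
    (F := fun z p => Ψ p * Complex.exp (z * (φ p : ℂ)))
    (F' := fun z p => Ψ p * (Complex.exp (z * (φ p : ℂ)) * (φ p : ℂ)))
    (x₀ := z) (s := Metric.ball z 1)
    (bound := fun p => ‖Ψ p‖ * Real.exp ((|z.re| + 1 + 1) * |φ p|))
    (Metric.ball_mem_nhds z one_pos)
    (Filter.Eventually.of_forall fun w => hΨ.mul (m w)) (param_int hφ hΨ hInteg z)
    (hΨ.mul ((m z).mul m2)) (Filter.Eventually.of_forall fun p w hw => ?_)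
    (hInteg _ (by positivity)) (Filter.Eventually.of_forall fun p w _ => ?_)
  · exact this.2.differentiableAt
  · rw [norm_mul, norm_mul, Complex.norm_real, Real.norm_eq_abs, add_mul _ 1 |φ p|, Real.exp_add, one_mul]
    have h1 : |w.re| ≤ |z.re| + 1 := by
      have h2 : |(w - z).re| ≤ ‖w - z‖ := Complex.abs_re_le_norm _
      rw [Metric.mem_ball, dist_eq_norm] at hw
      have h3 : w.re = z.re + (w - z).re := by simp
      rw [h3]
      exact (abs_add_le _ _).trans (by linarith)
    have h4 := cexp_norm_le w (φ p) _ h1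
    have h5 : |φ p| ≤ Real.exp |φ p| := by linarith [Real.add_one_le_exp |φ p|]
    gcongr
  · have h1 : HasDerivAt (fun w : ℂ => w * (φ p : ℂ)) (φ p : ℂ) w := by
      simpa using (hasDerivAt_id w).mul_const (φ p : ℂ)
    exact h1.cexp.const_mul _

end param

lemma Lg_cont : Continuous Lg := Lg_htg.1.continuous

/-- kernel -/
def Ps (h u : 𝓢(V, ℂ)) (p : V × V) : ℂ :=
  (starRingEnd ℂ) (h p.1) * (Complex.exp (((-2 * π * inner ℝ p.2 p.1 : ℝ) : ℂ) * Complex.I) * u p.2)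

def fi (β γ : ℝ) (p : V × V) : ℝ := β * Lg p.1 + γ * Lg p.2

lemma Ps_cont (h u : 𝓢(V, ℂ)) : Continuous (Ps h u) := by
  have h1 := h.continuous
  have h2 := u.continuous
  unfold Ps
  have h3 : Continuous fun p : V × V => (starRingEnd ℂ) (h p.1) :=
    Complex.continuous_conj.comp (by fun_prop)
  fun_prop

lemma fi_cont (β γ : ℝ) : Continuous (fi β γ) := by
  have := Lg_cont
  unfold fi
  fun_prop

lemma Ps_norm (h u : 𝓢(V, ℂ)) (p : V × V) : ‖Ps h u p‖ = ‖h p.1‖ * ‖u p.2‖ := by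
  rw [Ps, norm_mul, norm_mul, Complex.norm_exp_ofReal_mul_I, one_mul, RCLike.norm_conj]

lemma wnorm_int (s : ℝ) (g : 𝓢(V, ℂ)) : Integrable (fun x => ‖g x‖ * om s x) := by
  have := ((M (omc s) g).integrable (μ := volume)).norm
  refine this.congr (Filter.Eventually.of_forall fun x => ?_)
  simp only
  rw [M_apply (omc_htg s), norm_mul, omc_norm, mul_comm]

lemma Ps_int (β γ : ℝ) (h u : 𝓢(V, ℂ)) (R : ℝ) (hR : 0 ≤ R) :
    Integrable (fun p => ‖Ps h u p‖ * Real.exp (R * |fi β γ p|))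
      ((volume : Measure V).prod (volume : Measure V)) := by
  have h1 := (wnorm_int (R * |β|) h).mul_prod (wnorm_int (R * |γ|) u)
  refine h1.mono' ?_ (Filter.Eventually.of_forall fun p => ?_)
  · have c1 := Ps_cont h u
    have c2 := fi_cont β γ
    exact Continuous.aestronglyMeasurable (by fun_prop)
  · rw [Real.norm_of_nonneg (by positivity), Ps_norm, om_eq, om_eq]
    have : ‖h p.1‖ * Real.exp (R * |β| * Lg p.1) * (‖u p.2‖ * Real.exp (R * |γ| * Lg p.2))
      = ‖h p.1‖ * ‖u p.2‖ * Real.exp (R * (|β| * Lg p.1 + |γ| * Lg p.2)) := by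
      rw [mul_add, Real.exp_add]; ring_nf
    rw [this]
    gcongr
    unfold fi
    refine (abs_add_le _ _).trans (le_of_eq ?_)
    rw [abs_mul, abs_mul, abs_of_nonneg (Lg_nonneg _), abs_of_nonneg (Lg_nonneg _)]

def FF (β γ : ℝ) (h u : 𝓢(V, ℂ)) (z : ℂ) : ℂ :=
  ∫ p, Ps h u p * Complex.exp (z * (fi β γ p : ℂ)) ∂((volume : Measure V).prod (volume : Measure V))

lemma FF_diff (β γ : ℝ) (h u : 𝓢(V, ℂ)) : Differentiable ℂ (FF β γ h u) :=
  param_diff (fi_cont β γ).aestronglyMeasurable (Ps_cont h u).aestronglyMeasurable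
    (Ps_int β γ h u)

lemma FF_bdd (β γ : ℝ) (h u : 𝓢(V, ℂ)) : ∃ B, ∀ z : ℂ, |z.re| ≤ 1 → ‖FF β γ h u z‖ ≤ B := by
  refine ⟨_, fun z hz => norm_integral_le_of_norm_le (Ps_int β γ h u 1 zero_le_one)
    (Filter.Eventually.of_forall fun p => ?_)⟩
  rw [norm_mul]
  gcongr
  exact cexp_norm_le z _ _ hz

lemma FF_eq (β γ : ℝ) (h u v : 𝓢(V, ℂ)) (z : ℂ)
    (hv : ∀ x, v x = Complex.exp (z * ((γ * Lg x : ℝ) : ℂ)) * u x) :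
    FF β γ h u z = ∫ ξ, (starRingEnd ℂ) (h ξ) *
      (Complex.exp (z * ((β * Lg ξ : ℝ) : ℂ)) * (𝓕 v : 𝓢(V, ℂ)) ξ) := by
  unfold FF
  rw [integral_prod _ (param_int (fi_cont β γ).aestronglyMeasurable
    (Ps_cont h u).aestronglyMeasurable (Ps_int β γ h u) z)]
  congr 1
  funext ξ
  rw [SchwartzMap.fourier_coe, Real.fourier_eq', ← integral_const_mul, ← integral_const_mul]
  congr 1
  funext x
  rw [hv, Ps, fi]
  push_cast
  rw [mul_add, Complex.exp_add, smul_eq_mul]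
  ring

lemma FF_le (α β γ : ℝ) (h u v : 𝓢(V, ℂ)) (z : ℂ)
    (hv : ∀ x, v x = Complex.exp (z * ((γ * Lg x : ℝ) : ℂ)) * u x) :
    ‖FF β γ (M (omc α) h) u z‖ ≤
      √(∫ ξ, ‖h ξ‖ ^ 2) * √(I2 (2 * (α + β * z.re)) v) := by
  rw [FF_eq β γ _ u v z hv]
  set r := α + β * z.re with hr
  set g := M (omc r) (𝓕 v) with hg
  have e1 : I2 (2 * r) v = ∫ ξ, ‖g ξ‖ ^ 2 := by
    unfold I2
    congr 1
    funext ξ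
    rw [wsq_eq, hg]
    congr 5
    ring
  have e2 : ∀ ξ, ‖(starRingEnd ℂ) (M (omc α) h ξ) *
      (Complex.exp (z * ((β * Lg ξ : ℝ) : ℂ)) * (𝓕 v : 𝓢(V, ℂ)) ξ)‖ = ‖h ξ‖ * ‖g ξ‖ := by
    intro ξ
    rw [hg, norm_mul, RCLike.norm_conj, M_apply (omc_htg _), M_apply (omc_htg _), norm_mul,
      norm_mul, norm_mul, omc_norm, omc_norm, hr, om_add, Complex.norm_exp, Complex.re_mul_ofReal,
      om_eq (β * z.re)]
    have : z.re * (β * Lg ξ) = β * z.re * Lg ξ := by ring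
    rw [this]
    ring
  refine (norm_integral_le_integral_norm _).trans ?_
  simp_rw [e2]
  rw [e1, Real.sqrt_eq_rpow, Real.sqrt_eq_rpow]
  have := integral_mul_norm_le_Lp_mul_Lq (μ := (volume : Measure V)) (f := h) (g := g)
    Real.HolderConjugate.two_two
    (by simpa using h.memLp 2 volume) (by simpa using g.memLp 2 volume)
  simpa using this

lemma growth (K l : ℝ) (n : ℕ) (hK : 0 < K) :
    ∃ A, 0 < A ∧ ∀ y : ℝ, Real.exp (1/4 - y ^ 2) * √(K * (1 + (l * y) ^ 2) ^ n) ≤ A := by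
  refine ⟨√(K * (1 + l ^ 2) ^ n * n.factorial * Real.exp (3/2)), by positivity, fun y => ?_⟩
  have h0 : Real.exp (1/4 - y ^ 2) = √(Real.exp (1/2 - 2 * y ^ 2)) := by
    rw [← Real.exp_half]; congr 1; ring
  rw [h0, ← Real.sqrt_mul (Real.exp_pos _).le]
  apply Real.sqrt_le_sqrt
  have h1 : (1 + (l * y) ^ 2) ^ n ≤ (1 + l ^ 2) ^ n * (1 + y ^ 2) ^ n := by
    rw [← mul_pow]
    apply pow_le_pow_left₀ (by positivity)
    nlinarith [sq_nonneg l, sq_nonneg y]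
  have h2 : (1 + y ^ 2) ^ n ≤ n.factorial * Real.exp (1 + y ^ 2) := by
    have := Real.pow_div_factorial_le_exp (1 + y ^ 2) (by positivity) n
    rwa [div_le_iff₀' (by positivity)] at this
  have h3 : Real.exp (1/2 - 2 * y ^ 2) * Real.exp (1 + y ^ 2) ≤ Real.exp (3/2) := by
    rw [← Real.exp_add]
    apply Real.exp_le_exp.2
    nlinarith [sq_nonneg y]
  calc _ ≤ Real.exp (1/2 - 2 * y ^ 2) * (K * ((1 + l ^ 2) ^ n *
        (n.factorial * Real.exp (1 + y ^ 2)))) := by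
        gcongr
        exact h1.trans (by gcongr)
    _ = K * (1 + l ^ 2) ^ n * n.factorial * (Real.exp (1/2 - 2 * y ^ 2) * Real.exp (1 + y ^ 2)) := by
        ring
    _ ≤ _ := by gcongr

lemma norm_gauss (z : ℂ) : ‖Complex.exp ((z - 1/2) ^ 2)‖ =
    Real.exp ((z.re - 1/2) ^ 2 - z.im ^ 2) := by
  rw [Complex.norm_exp]
  congr 1
  have h1 : (1/2 : ℂ).re = 1/2 := by norm_num
  have h2 : (1/2 : ℂ).im = 0 := by norm_num
  rw [sq, Complex.mul_re, Complex.sub_re, Complex.sub_im, h1, h2]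
  ring

lemma main_bound (k l δ : ℝ) : ∃ C, 0 < C ∧ ∀ u : 𝓢(V, ℂ),
    I2 k (M (omc (l/2)) u) ≤ C * √(I2 (k + δ) (M (omc l) u)) * √(I2 (k - δ) u) := by
  obtain ⟨K0, n0, hK0, hM0⟩ := mult_E_all (k - δ)
  obtain ⟨K1, n1, hK1, hM1⟩ := mult_E_all (k + δ)
  obtain ⟨A, hA, hA'⟩ := growth K0 l n0 hK0
  obtain ⟨B, hB, hB'⟩ := growth K1 l n1 hK1
  refine ⟨A * B, by positivity, fun u => ?_⟩
  set v0 := M (omc (l/2)) u with hv0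
  set N := I2 k v0 with hN
  set X := I2 (k + δ) (M (omc l) u) with hX
  set Y := I2 (k - δ) u with hY
  set h := M (omc (k/2)) (𝓕 v0) with hh
  have hN0 : 0 ≤ N := I2_nonneg _ _
  have hhN : ∫ ξ, ‖h ξ‖ ^ 2 = N := by
    rw [hN, I2, hh]
    simp_rw [wsq_eq]
  set α := (k - δ) / 2 with hα
  set F : ℂ → ℂ := fun z => Complex.exp ((z - 1/2) ^ 2) * FF δ l (M (omc α) h) u z with hF
  have hFhalf : F (1/2 : ℂ) = N := by
    rw [hF]
    simp only [sub_self]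
    rw [FF_eq δ l _ u v0 (1/2)]
    · rw [hN, I2, ← integral_complex_ofReal]
      simp only [ne_eq, OfNat.ofNat_ne_zero, not_false_eq_true, zero_pow, Complex.exp_zero, one_mul]
      congr 1
      funext ξ
      rw [M_apply (omc_htg _), hh, M_apply (omc_htg _), map_mul, map_mul, omc, omc,
        Complex.conj_ofReal, Complex.conj_ofReal]
      have e1 : Complex.exp (1 / 2 * ((δ * Lg ξ : ℝ) : ℂ)) = ((om (δ/2) ξ : ℝ) : ℂ) := by
        rw [om_eq]; push_cast; congr 1; ring
      have e2 : om k ξ = om α ξ * om (k/2) ξ * om (δ/2) ξ := by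
        rw [← om_add, ← om_add]; congr 1; rw [hα]; ring
      rw [e1, e2]
      push_cast
      rw [← Complex.mul_conj']
      ring
    · intro x
      rw [hv0, M_apply (omc_htg _), omc, om_eq]
      push_cast
      congr 2
      ring
  have hFa : ∀ z ∈ Complex.re ⁻¹' {(0:ℝ)}, ‖F z‖ ≤ A * (√N * √Y) := by
    intro z hz
    have hz0 : z.re = 0 := hz
    have hzz : z = Complex.I * z.im := by apply Complex.ext <;> simp [hz0]
    have b1 := FF_le α δ l h u (M (EE (l * z.im)) u) z (fun x => by
      rw [M_apply (EE_htg _), EE]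
      congr 2
      conv_rhs => rw [hzz]
      push_cast; ring)
    have b2 : 2 * (α + δ * z.re) = k - δ := by rw [hz0, hα]; ring
    rw [b2, hhN] at b1
    have b3 := Real.sqrt_le_sqrt (hM0 (l * z.im) u)
    rw [Real.sqrt_mul (by positivity)] at b3
    have b4 := hA' z.im
    rw [hF]
    simp only
    rw [norm_mul, norm_gauss, hz0]
    have b5 : ((0:ℝ) - 1/2) ^ 2 = 1/4 := by norm_num
    rw [b5]
    calc _ ≤ Real.exp (1/4 - z.im ^ 2) * (√N * (√(K0 * (1 + (l * z.im) ^ 2) ^ n0) * √Y)) := by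
          gcongr
          exact b1.trans (by gcongr)
      _ = Real.exp (1/4 - z.im ^ 2) * √(K0 * (1 + (l * z.im) ^ 2) ^ n0) * (√N * √Y) := by ring
      _ ≤ _ := by gcongr
  have hFb : ∀ z ∈ Complex.re ⁻¹' {(1:ℝ)}, ‖F z‖ ≤ B * (√N * √X) := by
    intro z hz
    have hz0 : z.re = 1 := hz
    have hzz : z = 1 + Complex.I * z.im := by apply Complex.ext <;> simp [hz0]
    have b1 := FF_le α δ l h u (M (EE (l * z.im)) (M (omc l) u)) z (fun x => by
      rw [M_apply (EE_htg _), M_apply (omc_htg _), EE, omc, om_eq, ← mul_assoc]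
      push_cast
      rw [← Complex.exp_add]
      congr 2
      conv_rhs => rw [hzz]
      ring)
    have b2 : 2 * (α + δ * z.re) = k + δ := by rw [hz0, hα]; ring
    rw [b2, hhN] at b1
    have b3 := Real.sqrt_le_sqrt (hM1 (l * z.im) (M (omc l) u))
    rw [Real.sqrt_mul (by positivity)] at b3
    have b4 := hB' z.im
    rw [hF]
    simp only
    rw [norm_mul, norm_gauss, hz0]
    have b5 : ((1:ℝ) - 1/2) ^ 2 = 1/4 := by norm_num
    rw [b5]
    calc _ ≤ Real.exp (1/4 - z.im ^ 2) * (√N * (√(K1 * (1 + (l * z.im) ^ 2) ^ n1) * √X)) := by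
          gcongr
          exact b1.trans (by gcongr)
      _ = Real.exp (1/4 - z.im ^ 2) * √(K1 * (1 + (l * z.im) ^ 2) ^ n1) * (√N * √X) := by ring
      _ ≤ _ := by gcongr
  have hFd : Differentiable ℂ F := by
    have := FF_diff δ l (M (omc α) h) u
    rw [hF]
    fun_prop
  have hbd : BddAbove ((norm ∘ F) '' Complex.HadamardThreeLines.verticalClosedStrip 0 1) := by
    obtain ⟨D, hD⟩ := FF_bdd δ l (M (omc α) h) u
    refine ⟨Real.exp 1 * D, ?_⟩
    rintro _ ⟨z, hz, rfl⟩
    have hz' : 0 ≤ z.re ∧ z.re ≤ 1 := hz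
    have d1 := hD z (abs_le.2 ⟨by linarith, hz'.2⟩)
    simp only [Function.comp_apply, hF]
    rw [norm_mul, norm_gauss]
    gcongr
    nlinarith [sq_nonneg z.im]
  have key := Complex.HadamardThreeLines.norm_le_interp_of_mem_verticalClosedStrip₀₁' F
    (z := (1/2 : ℂ)) (show (1/2 : ℂ).re ∈ Set.Icc (0:ℝ) 1 by norm_num) hFd.diffContOnCl hbd hFa hFb
  have hre : (1/2 : ℂ).re = 1/2 := by norm_num
  rw [hFhalf, hre, Complex.norm_real, Real.norm_of_nonneg hN0] at key
  have hh2 : (1 : ℝ) - 1/2 = 1/2 := by norm_num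
  rw [hh2, ← Real.sqrt_eq_rpow, ← Real.sqrt_eq_rpow, ← Real.sqrt_mul (by positivity)] at key
  rcases eq_or_lt_of_le hN0 with h0 | hpos
  · rw [← h0]; positivity
  · have k2 : N ^ 2 ≤ A * (√N * √Y) * (B * (√N * √X)) := by
      have := pow_le_pow_left₀ hN0 key 2
      rwa [Real.sq_sqrt (by positivity)] at this
    have k3 : √N * √N = N := Real.mul_self_sqrt hN0
    have k4 : N * N ≤ N * (A * B * √X * √Y) := by
      calc N * N = N ^ 2 := by ring
        _ ≤ _ := k2
        _ = (√N * √N) * (A * B * √X * √Y) := by ring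
        _ = _ := by rw [k3]
    exact le_of_mul_le_mul_left k4 hpos

end WSI

/-- bilinear interpolation inequality
`‖u‖²_{H^k_l} ≤ C ‖u‖_{H^{k+δ}_{2l}} ‖u‖_{H^{k-δ}}`. -/
theorem weighted_sobolev_bilinear_interpolation (k l δ : ℝ) (hδ : 0 < δ) :
    ∃ C > 0, ∀ u : 𝓢(V, ℂ),
      HnormW k l (u : V → ℂ) ^ 2
        ≤ C * HnormW (k + δ) (2*l) (u : V → ℂ) * Hnorm (k - δ) (u : V → ℂ) := by
  obtain ⟨C, hC, h⟩ := WSI.main_bound k l δ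
  refine ⟨C, hC, fun u => ?_⟩
  rw [WSI.HnormW_eq, WSI.HnormW_eq, WSI.Hnorm_eq, ← Real.sqrt_eq_rpow, ← Real.sqrt_eq_rpow,
    ← Real.sqrt_eq_rpow, Real.sq_sqrt (WSI.I2_nonneg _ _), mul_div_cancel_left₀ l two_ne_zero]
  exact h u
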